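/- Let f : ℝ² → ℝ be a nonconstant real polynomial function of degree d in two variables with only finitely many critical points. Then for every admissible radius R the index i of grad f around the circle of radius R satisfies i ≥ 1 − d_R, where d_R is the real degree of f. -/

import Mathlib

open MvPolynomial Filter

/-- Evaluation of a polynomial in two variables at the point `(x, y)`. -/
noncomputable def evalP (f : MvPolynomial (Fin 2) ℝ) (x y : ℝ) : ℝ :=
  MvPolynomial.eval ![x, y] f

/-- `p` is a critical point of `f`: both partial derivatives vanish at `p`. -/
def IsCriticalPt (f : MvPolynomial (Fin 2) ℝ) (p : ℝ × ℝ) : Prop :=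
  evalP (pderiv 0 f) p.1 p.2 = 0 ∧ evalP (pderiv 1 f) p.1 p.2 = 0

/-- `u(t) = f_x(R cos t, R sin t)`. -/
noncomputable def uFun (f : MvPolynomial (Fin 2) ℝ) (R t : ℝ) : ℝ :=
  evalP (pderiv 0 f) (R * Real.cos t) (R * Real.sin t)

/-- `v(t) = f_y(R cos t, R sin t)`. -/
noncomputable def vFun (f : MvPolynomial (Fin 2) ℝ) (R t : ℝ) : ℝ :=
  evalP (pderiv 1 f) (R * Real.cos t) (R * Real.sin t)

/-- The index of `grad f` around the circle of radius `R`, as the winding-number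
integral `(1/(2π)) ∫₀^{2π} (u v' - v u')/(u² + v²) dt`. -/
noncomputable def gradIndex (f : MvPolynomial (Fin 2) ℝ) (R : ℝ) : ℝ :=
  (1 / (2 * Real.pi)) *
    ∫ t in (0:ℝ)..(2 * Real.pi),
      (uFun f R t * deriv (vFun f R) t - vFun f R t * deriv (uFun f R) t) /
        ((uFun f R t) ^ 2 + (vFun f R t) ^ 2)

/-- The multiplicity of the real linear form `b·x − a·y` in `F`: the largest `m`
such that `(b·x − a·y)^m` divides `F` in `ℝ[x,y]`. -/
noncomputable def linMult (F : MvPolynomial (Fin 2) ℝ) (a b : ℝ) : ℕ :=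
  sSup {m : ℕ | (C b * X 0 - C a * X 1) ^ m ∣ F}

/-- The "real degree" of a homogeneous polynomial `F`: the sum, over the points
`[a : b]` of the real projective line (represented by `[a : 1]` for `a ∈ ℝ`,
together with `[1 : 0]`), of the multiplicity of the real linear factor
`b·x − a·y` in `F`; i.e. the sum of the multiplicities of the real linear
factors of `F`. -/
noncomputable def realDegreeOf (F : MvPolynomial (Fin 2) ℝ) : ℕ :=
  (∑ᶠ a : ℝ, linMult F a 1) + linMult F 1 0

/-!
Regard `grad f` along the circle of radius `r` as a plane curve `z = f_x + i f_y`; the index is its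
total argument variation divided by `2π`. It is an integer depending continuously on `r ≥ R`, so it
may be computed for `r` as large as we please. In the rotating frame `w t = z t * exp (-i t)` the
index drops by `1`, and `r * Re w` is the restriction to the circle of the Euler operator
`x f_x + y f_y`, whose top homogeneous component is `d • f_d`.

As `r → ∞`, the zeros of this function of `t` cluster at the zeros of `f_d` on the unit circle,
where the order of vanishing is the multiplicity of the corresponding linear factor. By Rolle's
theorem that order bounds the number of nearby zeros, and the circle meets each line twice, so there
are at most `2 d_ℝ` zeros in total. Between consecutive zeros of `Re w` the argument of `w` changes
by at most `π`; hence `|2π(i - 1)| ≤ (2 d_ℝ + 1) π`, and integrality of `i` gives `i ≥ 1 - d_ℝ`.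
-/

open Set
open Function (uncurry support)
open scoped ContDiff Real Topology

section Homogeneous

variable {σ R : Type*} [CommSemiring R] {m k : ℕ} {P F : MvPolynomial σ R}

lemma homogeneousComponent_add_mul (hP : P.IsHomogeneous m) (k : ℕ) (Q : MvPolynomial σ R) :
    homogeneousComponent (m + k) (P * Q) = P * homogeneousComponent k Q := by
  let := gradedAlgebra (σ := σ) (R := R)
  simp only [← decomposition.decompose'_apply]
  exact DirectSum.coe_decompose_mul_add_of_left_mem (homogeneousSubmodule σ R) hP

lemma isHomogeneous_right_of_mul {R : Type*} [CommRing R] [NoZeroDivisors R]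
    {P Q : MvPolynomial σ R} (hP : P.IsHomogeneous m) (hPQ : (P * Q).IsHomogeneous k)
    (h0 : P * Q ≠ 0) : Q.IsHomogeneous Q.totalDegree := by
  obtain ⟨hP0, hQ0⟩ := mul_ne_zero_iff.mp h0
  have hk : k = m + Q.totalDegree := by
    rw [← hPQ.totalDegree h0, totalDegree_mul_of_isDomain hP0 hQ0, hP.totalDegree hP0]
  have hQ : homogeneousComponent Q.totalDegree Q = Q := mul_left_cancel₀ hP0 <| by
    rw [← homogeneousComponent_add_mul hP, ← hk, homogeneousComponent_eq_self hPQ]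
  have hcomp := homogeneousComponent_isHomogeneous Q.totalDegree Q
  rwa [hQ] at hcomp

lemma aeval_algebraMap_mul {A : Type*} [CommSemiring A] [Algebra R A] (hF : F.IsHomogeneous k)
    (c : σ → R) (y : A) :
    aeval (fun i ↦ algebraMap R A (c i) * y) F = algebraMap R A (eval c F) * y ^ k := by
  rw [aeval_def, eval₂_eq, eval_eq, map_sum, Finset.sum_mul]
  refine Finset.sum_congr rfl fun s hs ↦ ?_
  rw [hF.degree_eq_sum_deg_support hs, ← Finset.prod_pow_eq_pow_sum]
  simp only [mul_pow, Finset.prod_mul_distrib, map_mul, map_prod, map_pow, mul_assoc]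

end Homogeneous

section LinearForm

variable {R : Type*} [CommRing R] {F : MvPolynomial (Fin 2) R} {k : ℕ} {a b : R}

/-- The linear form `b·x − a·y` vanishing on the line through `(a, b)`. -/
noncomputable def linearForm (a b : R) : MvPolynomial (Fin 2) R :=
  C b * X 0 - C a * X 1

lemma isHomogeneous_linearForm (a b : R) : (linearForm a b).IsHomogeneous 1 :=
  (isHomogeneous_C_mul_X b 0).sub (isHomogeneous_C_mul_X a 1)

lemma eval_linearForm (a b x y : R) : eval ![x, y] (linearForm a b) = b * x - a * y := by
  simp [linearForm]

lemma linearForm_dvd_of_eval_eq_zero (hF : F.IsHomogeneous k) (hab : IsCoprime a b)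
    (h0 : eval ![a, b] F = 0) : linearForm a b ∣ F := by
  obtain ⟨c, e, hce⟩ := hab
  let q := Ideal.Quotient.mkₐ R (Ideal.span {linearForm a b})
  have hker (P) : q P = 0 ↔ linearForm a b ∣ P :=
    Ideal.Quotient.eq_zero_iff_mem.trans Ideal.mem_span_singleton
  have hbezout : (C c * C a + C e * C b : MvPolynomial (Fin 2) R) = 1 := by
    simp only [← C_mul, ← C_add, hce, C_1]
  have hX (i : Fin 2) : q (X i) = algebraMap R _ (![a, b] i) * q (C c * X 0 + C e * X 1) := by
    rw [← q.commutes, ← map_mul, ← sub_eq_zero, ← map_sub, hker, algebraMap_eq]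
    fin_cases i
    · refine ⟨C e, ?_⟩
      change X 0 - C a * (C c * X 0 + C e * X 1) = (C b * X 0 - C a * X 1) * C e
      linear_combination (-X 0) * hbezout
    · refine ⟨-C c, ?_⟩
      change X 1 - C b * (C c * X 0 + C e * X 1) = (C b * X 0 - C a * X 1) * -C c
      linear_combination (-X 1) * hbezout
  have hq : q = aeval fun i ↦ algebraMap R _ (![a, b] i) * q (C c * X 0 + C e * X 1) :=
    algHom_ext fun i ↦ by rw [aeval_X, hX]
  rw [← hker, hq, aeval_algebraMap_mul hF, h0, map_zero, zero_mul]

end LinearForm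

section LinMult

variable {F : MvPolynomial (Fin 2) ℝ} {k : ℕ} {a b c : ℝ}

lemma finiteMultiplicity_linearForm (hF : F ≠ 0) (a b : ℝ) :
    FiniteMultiplicity (linearForm a b) F := by
  refine .of_not_isUnit (fun hunit ↦ ?_) hF
  have := hunit.map (eval ![a, b])
  simp [eval_linearForm, mul_comm] at this

lemma linMult_eq_multiplicity (hF : F ≠ 0) (a b : ℝ) :
    linMult F a b = multiplicity (linearForm a b) F :=
  IsGreatest.csSup_eq ⟨pow_multiplicity_dvd _ _,
    fun _ ↦ (finiteMultiplicity_linearForm hF a b).le_multiplicity_of_pow_dvd⟩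

lemma exists_eq_linearForm_pow_mul (hF : F.IsHomogeneous k) (h0 : F ≠ 0) (hab : IsCoprime a b) :
    ∃ Q, F = linearForm a b ^ linMult F a b * Q ∧ evalP Q a b ≠ 0 := by
  rw [linMult_eq_multiplicity h0]
  obtain ⟨Q, hFQ, hQ⟩ := (finiteMultiplicity_linearForm h0 a b).exists_eq_pow_mul_and_not_dvd
  refine ⟨Q, hFQ, fun hQ0 ↦ hQ ?_⟩
  exact linearForm_dvd_of_eval_eq_zero
    (isHomogeneous_right_of_mul ((isHomogeneous_linearForm a b).pow _) (hFQ ▸ hF) (hFQ ▸ h0))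
    hab hQ0

lemma linMult_mul_left (F : MvPolynomial (Fin 2) ℝ) (hc : c ≠ 0) (a b : ℝ) :
    linMult F (c * a) (c * b) = linMult F a b := by
  have hunit (m : ℕ) : IsUnit (C (c ^ m) : MvPolynomial (Fin 2) ℝ) :=
    (isUnit_iff_ne_zero.mpr (pow_ne_zero m hc)).map C
  have hpow (m : ℕ) : (C (c * b) * X 0 - C (c * a) * X 1 : MvPolynomial (Fin 2) ℝ) ^ m =
      C (c ^ m) * (C b * X 0 - C a * X 1) ^ m := by
    rw [C_pow, ← mul_pow, C_mul, C_mul]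
    ring
  simp only [linMult, hpow, (hunit _).mul_left_dvd]

lemma linMult_smul (F : MvPolynomial (Fin 2) ℝ) (hc : c ≠ 0) : linMult (c • F) = linMult F := by
  have hunit : IsUnit (C c : MvPolynomial (Fin 2) ℝ) := (isUnit_iff_ne_zero.mpr hc).map C
  funext a b
  simp only [linMult, smul_eq_C_mul, hunit.dvd_mul_left]

lemma realDegreeOf_smul (F : MvPolynomial (Fin 2) ℝ) (hc : c ≠ 0) :
    realDegreeOf (c • F) = realDegreeOf F := by
  simp only [realDegreeOf, linMult_smul F hc]

end LinMult

section ParametricCalculus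

variable {E F : Type*} [NormedAddCommGroup E] [NormedSpace ℝ E] [NormedAddCommGroup F]
  [NormedSpace ℝ F] {G : E → ℝ → F}

lemma contDiff_of_uncurry {n : ℕ∞ω} (hG : ContDiff ℝ n (uncurry G)) (s : E) :
    ContDiff ℝ n (G s) :=
  hG.comp (contDiff_prodMk_right s)

lemma contDiff_uncurry_deriv {m n : ℕ∞ω} (hG : ContDiff ℝ m (uncurry G)) (hnm : n + 1 ≤ m) :
    ContDiff ℝ n (uncurry fun s ↦ deriv (G s)) := by
  refine (ContDiff.fderiv_apply (f := fun p : E × ℝ ↦ G p.1) (g := Prod.snd) (k := fun _ ↦ 1)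
    ?_ contDiff_snd contDiff_const hnm)
  exact hG.comp (contDiff_fst.fst.prodMk contDiff_snd)

lemma contDiff_uncurry_iteratedDeriv (hG : ContDiff ℝ ∞ (uncurry G)) (n : ℕ) :
    ContDiff ℝ ∞ (uncurry fun s ↦ iteratedDeriv n (G s)) := by
  induction n with
  | zero => simpa only [iteratedDeriv_zero] using hG
  | succ n ih => simpa only [iteratedDeriv_succ] using contDiff_uncurry_deriv ih le_rfl

end ParametricCalculus

section ZeroCounting

lemma encard_zeros_le_encard_zeros_deriv_add_one {g : ℝ → ℝ} (hg : Continuous g) {U : Set ℝ}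
    (hU : U.OrdConnected) :
    {t ∈ U | g t = 0}.encard ≤ {t ∈ U | deriv g t = 0}.encard + 1 := by
  refine ENat.forall_natCast_le_iff_le.mp fun n hn ↦ ?_
  obtain ⟨Z, hZ, hcard⟩ := exists_subset_encard_eq hn
  lift Z to Finset ℝ using finite_of_encard_eq_coe hcard
  rw [encard_coe_eq_coe_finsetCard, Nat.cast_inj] at hcard
  rcases n with _ | n
  · simp
  let e := Z.orderEmbOfFin hcard
  have he (i) : e i ∈ {t ∈ U | g t = 0} := hZ (Z.orderEmbOfFin_mem hcard i)
  have rolle (i : Fin n) : ∃ c ∈ Ioo (e i.castSucc) (e i.succ), deriv g c = 0 :=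
    exists_deriv_eq_zero (e.strictMono i.castSucc_lt_succ) hg.continuousOn
      ((he _).2.trans (he _).2.symm)
  choose c hc hc0 using rolle
  have hc_mono : StrictMono c := fun i j hij ↦
    calc c i < e i.succ := (hc i).2
      _ ≤ e j.castSucc := e.monotone (Fin.succ_le_castSucc_iff.mpr hij)
      _ < c j := (hc j).1
  have hc_mem : range c ⊆ {t ∈ U | deriv g t = 0} := by
    rintro _ ⟨i, rfl⟩
    exact ⟨hU.out (he _).1 (he _).1 (Ioo_subset_Icc_self (hc i)), hc0 i⟩
  calc ((n + 1 : ℕ) : ℕ∞) = (range c).encard + 1 := by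
        rw [← image_univ, hc_mono.injective.encard_image, encard_univ]
        simp
    _ ≤ _ := by gcongr

lemma encard_zeros_le_of_iteratedDeriv_ne_zero {g : ℝ → ℝ} {m : ℕ} (hg : ContDiff ℝ m g)
    {U : Set ℝ} (hU : U.OrdConnected) (hm : ∀ t ∈ U, iteratedDeriv m g t ≠ 0) :
    {t ∈ U | g t = 0}.encard ≤ m := by
  induction m generalizing g with
  | zero =>
    have : {t ∈ U | g t = 0} = ∅ := by simpa [eq_empty_iff_forall_notMem] using hm
    simp [this]
  | succ m ih =>
    rw [Nat.cast_add, Nat.cast_one] at hg ⊢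
    refine (encard_zeros_le_encard_zeros_deriv_add_one hg.continuous hU).trans ?_
    gcongr
    refine ih (contDiff_succ_iff_deriv.mp hg).2.2 fun t ht ↦ ?_
    rw [← iteratedDeriv_succ']
    exact hm t ht

variable {E : Type*} [NormedAddCommGroup E] [NormedSpace ℝ E] {G : E → ℝ → ℝ}

lemma exists_nhds_eventually_encard_zeros_le (hG : ContDiff ℝ ∞ (uncurry G)) {s₀ : E} {t₀ : ℝ}
    {m : ℕ} (hm : iteratedDeriv m (G s₀) t₀ ≠ 0) :
    ∃ U ∈ 𝓝 t₀, ∀ᶠ s in 𝓝 s₀, {t ∈ U | G s t = 0}.encard ≤ m := by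
  have hne : ∀ᶠ p in 𝓝 s₀ ×ˢ 𝓝 t₀, iteratedDeriv m (G p.1) p.2 ≠ 0 := by
    rw [← nhds_prod_eq]
    exact (contDiff_uncurry_iteratedDeriv hG m).continuous.continuousAt.eventually_ne hm
  obtain ⟨P, hP, Q, hQ, hPQ⟩ := eventually_prod_iff.mp hne
  obtain ⟨ε, hε, hball⟩ := Metric.eventually_nhds_iff_ball.mp hQ
  refine ⟨Metric.ball t₀ ε, Metric.ball_mem_nhds t₀ hε, hP.mono fun s hs ↦ ?_⟩
  have hGs : ContDiff ℝ m (G s) :=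
    (contDiff_of_uncurry hG s).of_le (mod_cast le_top)
  exact encard_zeros_le_of_iteratedDeriv_ne_zero hGs (convex_ball t₀ ε).ordConnected
    fun t ht ↦ hPQ hs (hball t ht)

lemma exists_finset_eventually_encard_zeros_le (hG : ContDiff ℝ ∞ (uncurry G)) {K : Set ℝ}
    (hK : IsCompact K) {s₀ : E} {m : ℝ → ℕ} (hm : ∀ t ∈ K, iteratedDeriv (m t) (G s₀) t ≠ 0) :
    ∃ T : Finset ℝ, ↑T ⊆ K ∧
      ∀ᶠ s in 𝓝 s₀, {t ∈ K | G s t = 0}.encard ≤ (∑ t ∈ T, m t : ℕ) := by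
  choose! U hU hUm using fun t ht ↦ exists_nhds_eventually_encard_zeros_le hG (hm t ht)
  obtain ⟨T, hTK, hcover⟩ := hK.elim_nhds_subcover U hU
  refine ⟨T, hTK, ?_⟩
  filter_upwards [(eventually_all_finset T).mpr fun t ht ↦ hUm t (hTK t ht)] with s hs
  have hsub : {t ∈ K | G s t = 0} ⊆ ⋃ t ∈ T, {τ ∈ U t | G s τ = 0} := by
    rintro τ ⟨hτ, h0⟩
    obtain ⟨t, ht, hτt⟩ := mem_iUnion₂.mp (hcover hτ)
    exact mem_iUnion₂.mpr ⟨t, ht, hτt, h0⟩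
  calc {t ∈ K | G s t = 0}.encard ≤ ∑ t ∈ T, {τ ∈ U t | G s τ = 0}.encard :=
        (encard_le_encard hsub).trans (Finset.set_encard_biUnion_le _ _)
    _ ≤ ∑ t ∈ T, (m t : ℕ∞) := Finset.sum_le_sum hs
    _ = (∑ t ∈ T, m t : ℕ) := (Nat.cast_sum _ _).symm

end ZeroCounting

section Circle

/-- The value of `P` at the point of polar coordinates `(r, t)`. -/
noncomputable def circleEval (P : MvPolynomial (Fin 2) ℝ) (r t : ℝ) : ℝ :=
  evalP P (r * Real.cos t) (r * Real.sin t)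

variable {F P : MvPolynomial (Fin 2) ℝ} {k : ℕ}

lemma contDiff_uncurry_circleEval (P : MvPolynomial (Fin 2) ℝ) :
    ContDiff ℝ ω (uncurry (circleEval P)) := by
  refine (AnalyticOnNhd.eval_mvPolynomial P).contDiff.comp (contDiff_pi.mpr fun i ↦ ?_)
  fin_cases i
  · exact contDiff_fst.mul (Real.contDiff_cos.comp contDiff_snd)
  · exact contDiff_fst.mul (Real.contDiff_sin.comp contDiff_snd)

lemma contDiff_circleEval (P : MvPolynomial (Fin 2) ℝ) (r : ℝ) :
    ContDiff ℝ ω (circleEval P r) :=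
  contDiff_of_uncurry (contDiff_uncurry_circleEval P) r

lemma analyticAt_circleEval (P : MvPolynomial (Fin 2) ℝ) (r t : ℝ) :
    AnalyticAt ℝ (circleEval P r) t :=
  (contDiff_circleEval P r).contDiffAt.analyticAt

lemma ne_zero_of_circleEval_ne_zero {r t : ℝ} (h : circleEval P r t ≠ 0) : P ≠ 0 := by
  rintro rfl
  exact h (map_zero _)

lemma circleEval_add_two_pi (P : MvPolynomial (Fin 2) ℝ) (r t : ℝ) :
    circleEval P r (t + 2 * π) = circleEval P r t := by
  simp only [circleEval, Real.cos_add_two_pi, Real.sin_add_two_pi]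

lemma circleEval_add_pi (P : MvPolynomial (Fin 2) ℝ) (r t : ℝ) :
    circleEval P r (t + π) = circleEval P (-r) t := by
  simp only [circleEval, Real.cos_add_pi, Real.sin_add_pi, mul_neg, neg_mul]

lemma circleEval_mul (P Q : MvPolynomial (Fin 2) ℝ) (r t : ℝ) :
    circleEval (P * Q) r t = circleEval P r t * circleEval Q r t :=
  map_mul _ P Q

lemma circleEval_eq_pow_mul (hF : F.IsHomogeneous k) (r t : ℝ) :
    circleEval F r t = r ^ k * circleEval F 1 t := by
  have hvec : ![r * Real.cos t, r * Real.sin t] =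
      fun i ↦ algebraMap ℝ ℝ (![1 * Real.cos t, 1 * Real.sin t] i) * r := by
    ext i
    fin_cases i <;> simp [mul_comm]
  rw [mul_comm, circleEval, evalP, hvec]
  exact aeval_algebraMap_mul hF _ r

lemma circleEval_add_pi_ne_zero (hF : F.IsHomogeneous k) {r t : ℝ} (ht : circleEval F r t ≠ 0) :
    circleEval F r (t + π) ≠ 0 := by
  rw [circleEval_add_pi, circleEval_eq_pow_mul hF, neg_pow, mul_assoc, ← circleEval_eq_pow_mul hF]
  exact mul_ne_zero (pow_ne_zero k (by norm_num)) ht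

lemma isCoprime_cos_sin (t : ℝ) : IsCoprime (Real.cos t) (Real.sin t) :=
  ⟨Real.cos t, Real.sin t, by linear_combination Real.cos_sq_add_sin_sq t⟩

lemma circleEval_linearForm (t x : ℝ) :
    circleEval (linearForm (Real.cos t) (Real.sin t)) 1 x = Real.sin (t - x) := by
  simp only [circleEval, evalP, eval_linearForm, Real.sin_sub]
  ring

lemma analyticOrderAt_circleEval_linearForm (t : ℝ) :
    analyticOrderAt (circleEval (linearForm (Real.cos t) (Real.sin t)) 1) t = 1 := by
  rw [funext (circleEval_linearForm t)]
  have hderiv : HasDerivAt (fun x ↦ Real.sin (t - x)) (-1) t := by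
    simpa using ((hasDerivAt_id t).const_sub t).sin
  refine AnalyticAt.analyticOrderAt_eq_one_of_zero_deriv_ne_zero (by fun_prop) (by simp) ?_
  simp [hderiv.deriv]

lemma analyticOrderAt_circleEval (hF : F.IsHomogeneous k) (h0 : F ≠ 0) (t : ℝ) :
    analyticOrderAt (circleEval F 1) t = linMult F (Real.cos t) (Real.sin t) := by
  obtain ⟨Q, hFQ, hQ⟩ := exists_eq_linearForm_pow_mul hF h0 (isCoprime_cos_sin t)
  have hQ1 : circleEval Q 1 t ≠ 0 := by simpa [circleEval] using hQ
  set L := linearForm (Real.cos t) (Real.sin t)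
  set m := linMult F (Real.cos t) (Real.sin t)
  have hpoint : circleEval F 1 = circleEval L 1 ^ m * circleEval Q 1 := by
    funext x
    rw [hFQ, circleEval_mul]
    exact congrArg (· * _) (map_pow _ L m)
  rw [hpoint,
    analyticOrderAt_mul ((analyticAt_circleEval _ _ _).pow _) (analyticAt_circleEval _ _ _),
    analyticOrderAt_pow (analyticAt_circleEval _ _ _), analyticOrderAt_circleEval_linearForm,
    (analyticAt_circleEval Q 1 t).analyticOrderAt_eq_zero.mpr hQ1, add_zero, nsmul_one]

lemma iteratedDeriv_linMult_circleEval_ne_zero (hF : F.IsHomogeneous k) (h0 : F ≠ 0) (t : ℝ) :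
    iteratedDeriv (linMult F (Real.cos t) (Real.sin t)) (circleEval F 1) t ≠ 0 :=
  ((analyticOrderAt_eq_nat_iff_iteratedDeriv_eq_zero (analyticAt_circleEval F 1 t)).mp
    (analyticOrderAt_circleEval hF h0 t)).2

lemma linMult_cos_sin_eq_zero (hF : F.IsHomogeneous k) {t : ℝ} (ht : circleEval F 1 t ≠ 0) :
    linMult F (Real.cos t) (Real.sin t) = 0 := by
  have h0 : F ≠ 0 := ne_zero_of_circleEval_ne_zero ht
  have horder := (analyticAt_circleEval F 1 t).analyticOrderAt_eq_zero.mpr ht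
  exact_mod_cast (analyticOrderAt_circleEval hF h0 t).symm.trans horder

lemma linMult_cos_sin_of_sin_ne_zero (F : MvPolynomial (Fin 2) ℝ) {t : ℝ} (ht : Real.sin t ≠ 0) :
    linMult F (Real.cos t) (Real.sin t) = linMult F (Real.cos t / Real.sin t) 1 := by
  rw [← linMult_mul_left F ht (Real.cos t / Real.sin t), mul_div_cancel₀ _ ht, mul_one]

lemma exists_circleEval_ne_zero (hF : F.IsHomogeneous k) (h0 : F ≠ 0) :
    ∃ t, circleEval F 1 t ≠ 0 := by
  by_contra! hzero
  apply iteratedDeriv_linMult_circleEval_ne_zero hF h0 0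
  simp [funext hzero]

lemma finite_zeros_circleEval (hF : F.IsHomogeneous k) (h0 : F ≠ 0) (a b : ℝ) :
    {t ∈ Icc a b | circleEval F 1 t = 0}.Finite := by
  obtain ⟨T, -, hT⟩ := exists_finset_eventually_encard_zeros_le (s₀ := (0 : ℝ))
    (G := fun _ ↦ circleEval F 1) (((contDiff_circleEval F 1).of_le le_top).comp contDiff_snd)
    (isCompact_Icc (a := a) (b := b))
    fun t _ ↦ iteratedDeriv_linMult_circleEval_ne_zero hF h0 t
  exact finite_of_encard_le_coe hT.self_of_nhds

lemma finite_support_linMult_one (hF : F.IsHomogeneous k) (h0 : F ≠ 0) :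
    (support fun a ↦ linMult F a 1).Finite := by
  refine ((finite_zeros_circleEval hF h0 0 π).image fun t ↦ Real.cos t / Real.sin t).subset
    fun a ha ↦ ?_
  have hsin : Real.sin (π / 2 - Real.arctan a) ≠ 0 := by
    simpa only [Real.sin_pi_div_two_sub] using (Real.cos_arctan_pos a).ne'
  have hcot : Real.cos (π / 2 - Real.arctan a) / Real.sin (π / 2 - Real.arctan a) = a := by
    rw [Real.cos_pi_div_two_sub, Real.sin_pi_div_two_sub, ← Real.tan_eq_sin_div_cos,
      Real.tan_arctan]
  have hmem : π / 2 - Real.arctan a ∈ Icc 0 π := by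
    constructor <;> linarith [Real.arctan_lt_pi_div_two a, Real.neg_pi_div_two_lt_arctan a]
  refine ⟨_, ⟨hmem, ?_⟩, hcot⟩
  by_contra hne
  have hmult := linMult_cos_sin_of_sin_ne_zero F hsin
  rw [hcot, linMult_cos_sin_eq_zero hF hne] at hmult
  exact ha hmult.symm

end Circle

section RealDegree

variable {F : MvPolynomial (Fin 2) ℝ} {k : ℕ} {α s t : ℝ}

lemma eq_of_sin_sub_eq_zero (hs : s ∈ Ico α (α + π)) (ht : t ∈ Ico α (α + π))
    (h : Real.sin (s - t) = 0) : s = t :=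
  sub_eq_zero.mp <| (Real.sin_eq_zero_iff_of_lt_of_lt (by linarith [hs.1, ht.2])
    (by linarith [hs.2, ht.1])).mp h

lemma linMult_cos_sin_of_sin_eq_zero (F : MvPolynomial (Fin 2) ℝ) (ht : Real.sin t = 0) :
    linMult F (Real.cos t) (Real.sin t) = linMult F 1 0 := by
  have hcos : Real.cos t ≠ 0 := fun h ↦ by simpa [h, ht] using Real.sin_sq_add_cos_sq t
  rw [← linMult_mul_left F hcos 1 0, mul_one, mul_zero, ht]

lemma sum_linMult_le_finsum (hF : F.IsHomogeneous k) (h0 : F ≠ 0) {Z : Finset ℝ}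
    (hZ : ↑Z ⊆ Ico α (α + π)) (hsin : ∀ t ∈ Z, Real.sin t ≠ 0) :
    ∑ t ∈ Z, linMult F (Real.cos t) (Real.sin t) ≤ ∑ᶠ a, linMult F a 1 := by
  have hinj : InjOn (fun t ↦ Real.cos t / Real.sin t) Z := fun s hs t ht hst ↦ by
    have hcross := (div_eq_div_iff (hsin s hs) (hsin t ht)).mp hst
    exact eq_of_sin_sub_eq_zero (hZ hs) (hZ ht) (by rw [Real.sin_sub]; linarith)
  rw [Finset.sum_congr rfl fun t ht ↦ linMult_cos_sin_of_sin_ne_zero F (hsin t ht),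
    ← Finset.sum_image (f := fun a ↦ linMult F a 1) hinj,
    finsum_eq_sum_of_support_subset_of_finite _ subset_rfl (finite_support_linMult_one hF h0)]
  exact Finset.sum_le_sum_of_ne_zero fun a _ ha ↦ by simpa using ha

lemma sum_linMult_le_of_sin_eq_zero (F : MvPolynomial (Fin 2) ℝ) {Z : Finset ℝ}
    (hZ : ↑Z ⊆ Ico α (α + π)) (hsin : ∀ t ∈ Z, Real.sin t = 0) :
    ∑ t ∈ Z, linMult F (Real.cos t) (Real.sin t) ≤ linMult F 1 0 := by
  have hcard : Z.card ≤ 1 := Finset.card_le_one.mpr fun s hs t ht ↦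
    eq_of_sin_sub_eq_zero (hZ hs) (hZ ht) (by simp [Real.sin_sub, hsin s hs, hsin t ht])
  rw [Finset.sum_congr rfl fun t ht ↦ linMult_cos_sin_of_sin_eq_zero F (hsin t ht),
    Finset.sum_const, smul_eq_mul]
  exact (Nat.mul_le_mul_right _ hcard).trans_eq (one_mul _)

lemma sum_linMult_le_realDegreeOf (hF : F.IsHomogeneous k) (h0 : F ≠ 0) {Z : Finset ℝ}
    (hZ : ↑Z ⊆ Ico α (α + π)) :
    ∑ t ∈ Z, linMult F (Real.cos t) (Real.sin t) ≤ realDegreeOf F := by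
  classical
  rw [← Finset.sum_filter_not_add_sum_filter Z (fun t ↦ Real.sin t = 0)]
  exact add_le_add
    (sum_linMult_le_finsum hF h0 ((Finset.coe_subset.mpr (Finset.filter_subset _ Z)).trans hZ)
      fun t ht ↦ (Finset.mem_filter.mp ht).2)
    (sum_linMult_le_of_sin_eq_zero F ((Finset.coe_subset.mpr (Finset.filter_subset _ Z)).trans hZ)
      fun t ht ↦ (Finset.mem_filter.mp ht).2)

end RealDegree

section LargeCircle

/-- For `g` of degree at most `d`, the function `r⁻ᵈ g(r cos t, r sin t)` written in terms of
`s = r⁻¹`, which makes sense at `s = 0`. -/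
noncomputable def scaledCircleEval (g : MvPolynomial (Fin 2) ℝ) (d : ℕ) (s t : ℝ) : ℝ :=
  ∑ k ∈ Finset.range (d + 1), s ^ (d - k) * circleEval (homogeneousComponent k g) 1 t

variable {g : MvPolynomial (Fin 2) ℝ} {d : ℕ} {α : ℝ}

lemma contDiff_uncurry_scaledCircleEval (g : MvPolynomial (Fin 2) ℝ) (d : ℕ) :
    ContDiff ℝ ω (uncurry (scaledCircleEval g d)) := by
  unfold uncurry scaledCircleEval
  exact ContDiff.sum fun k _ ↦
    (contDiff_fst.pow _).mul ((contDiff_circleEval _ 1).comp contDiff_snd)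

lemma scaledCircleEval_zero (g : MvPolynomial (Fin 2) ℝ) (d : ℕ) :
    scaledCircleEval g d 0 = circleEval (homogeneousComponent d g) 1 := by
  funext t
  rw [scaledCircleEval, Finset.sum_eq_single d (fun k hk hkd ↦ ?_) (by simp)]
  · rw [Nat.sub_self, pow_zero, one_mul]
  · rw [zero_pow (by grind), zero_mul]

lemma circleEval_eq_pow_mul_scaledCircleEval (hg : g.totalDegree ≤ d) {r : ℝ} (hr : r ≠ 0)
    (t : ℝ) : circleEval g r t = r ^ d * scaledCircleEval g d r⁻¹ t := by
  have hsum : g = ∑ k ∈ Finset.range (d + 1), homogeneousComponent k g := by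
    conv_lhs => rw [← sum_homogeneousComponent g]
    refine Finset.sum_subset (by simpa using hg) fun k _ hk ↦ ?_
    exact homogeneousComponent_eq_zero k g (by grind)
  conv_lhs => rw [hsum, circleEval, evalP, map_sum]
  rw [scaledCircleEval, Finset.mul_sum]
  refine Finset.sum_congr rfl fun k hk ↦ ?_
  have hpow : r ^ d * r⁻¹ ^ (d - k) = r ^ k := by
    rw [inv_pow, ← div_eq_mul_inv, div_eq_iff (pow_ne_zero _ hr), ← pow_add]
    congr 1
    grind
  rw [← mul_assoc, hpow, ← circleEval_eq_pow_mul (homogeneousComponent_isHomogeneous k g)]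
  rfl

lemma eventually_encard_zeros_Icc_pi_le (hg : g.totalDegree ≤ d)
    (hα : circleEval (homogeneousComponent d g) 1 α ≠ 0) :
    ∀ᶠ r in atTop, {t ∈ Icc α (α + π) | circleEval g r t = 0}.encard ≤
      realDegreeOf (homogeneousComponent d g) := by
  set F := homogeneousComponent d g
  have hF : F.IsHomogeneous d := homogeneousComponent_isHomogeneous d g
  have h0 : F ≠ 0 := ne_zero_of_circleEval_ne_zero hα
  obtain ⟨T, hT, hzeros⟩ := exists_finset_eventually_encard_zeros_le (s₀ := 0)
    ((contDiff_uncurry_scaledCircleEval g d).of_le le_top) (isCompact_Icc (a := α) (b := α + π))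
    (m := fun t ↦ linMult F (Real.cos t) (Real.sin t)) fun t _ ↦ by
      rw [scaledCircleEval_zero]
      exact iteratedDeriv_linMult_circleEval_ne_zero hF h0 t
  have hright : linMult F (Real.cos (α + π)) (Real.sin (α + π)) = 0 :=
    linMult_cos_sin_eq_zero hF (circleEval_add_pi_ne_zero hF hα)
  have hsum : ∑ t ∈ T, linMult F (Real.cos t) (Real.sin t) ≤ realDegreeOf F := by
    rw [← Finset.sum_erase (f := fun t ↦ linMult F (Real.cos t) (Real.sin t)) T hright]
    refine sum_linMult_le_realDegreeOf hF h0 (α := α) fun t ht ↦ ?_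
    obtain ⟨hne, ht⟩ := Finset.mem_erase.mp ht
    exact ⟨(hT ht).1, (hT ht).2.lt_of_ne hne⟩
  filter_upwards [tendsto_inv_atTop_zero.eventually hzeros, eventually_ne_atTop 0] with r hr hr0
  simp only [circleEval_eq_pow_mul_scaledCircleEval hg hr0, mul_eq_zero, pow_ne_zero d hr0,
    false_or]
  exact hr.trans (mod_cast hsum)

lemma eventually_encard_zeros_Icc_two_pi_le (hg : g.totalDegree ≤ d)
    (hα : circleEval (homogeneousComponent d g) 1 α ≠ 0) :
    ∀ᶠ r in atTop, {t ∈ Icc α (α + 2 * π) | circleEval g r t = 0}.encard ≤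
      (2 * realDegreeOf (homogeneousComponent d g) : ℕ) := by
  have hα' := circleEval_add_pi_ne_zero (homogeneousComponent_isHomogeneous d g) hα
  filter_upwards [eventually_encard_zeros_Icc_pi_le hg hα,
    eventually_encard_zeros_Icc_pi_le hg hα'] with r h₁ h₂
  have hsub : {t ∈ Icc α (α + 2 * π) | circleEval g r t = 0} ⊆
      {t ∈ Icc α (α + π) | circleEval g r t = 0} ∪
        {t ∈ Icc (α + π) (α + π + π) | circleEval g r t = 0} := fun t ⟨ht, h0⟩ ↦
    (le_total t (α + π)).imp (fun h ↦ ⟨⟨ht.1, h⟩, h0⟩)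
      fun h ↦ ⟨⟨h, by linarith [ht.2]⟩, h0⟩
  rw [two_mul (realDegreeOf _), Nat.cast_add]
  exact (encard_le_encard hsub).trans ((encard_union_le _ _).trans (add_le_add h₁ h₂))

end LargeCircle

section ArgVariation

/-- The increment over `[a, b]` of a continuous argument of the plane curve `z`, for a `C¹` curve
avoiding the origin. Integrating `z'/z` avoids choosing a branch of the argument. -/
noncomputable def argVariation (z : ℝ → ℂ) (a b : ℝ) : ℝ :=
  (∫ t in a..b, logDeriv z t).im

variable {z w : ℝ → ℂ} {a b : ℝ}

lemma continuous_logDeriv (hz : ContDiff ℝ 1 z) (hz0 : ∀ t, z t ≠ 0) : Continuous (logDeriv z) :=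
  (hz.continuous_deriv le_rfl).div hz.continuous hz0

lemma argVariation_add_adjacent (hz : ContDiff ℝ 1 z) (hz0 : ∀ t, z t ≠ 0) (a b c : ℝ) :
    argVariation z a b + argVariation z b c = argVariation z a c := by
  have hint (x y) := (continuous_logDeriv hz hz0).intervalIntegrable (μ := MeasureTheory.volume) x y
  simp only [argVariation, ← Complex.add_im,
    intervalIntegral.integral_add_adjacent_intervals (hint a b) (hint b c)]

lemma argVariation_mul (hz : ContDiff ℝ 1 z) (hz0 : ∀ t, z t ≠ 0) (hw : ContDiff ℝ 1 w)
    (hw0 : ∀ t, w t ≠ 0) (a b : ℝ) :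
    argVariation (fun t ↦ z t * w t) a b = argVariation z a b + argVariation w a b := by
  have hlog (t) : logDeriv (fun t ↦ z t * w t) t = logDeriv z t + logDeriv w t :=
    logDeriv_mul t (hz0 t) (hw0 t) (hz.differentiable one_ne_zero t)
      (hw.differentiable one_ne_zero t)
  simp only [argVariation, hlog, ← Complex.add_im]
  rw [intervalIntegral.integral_add ((continuous_logDeriv hz hz0).intervalIntegrable a b)
    ((continuous_logDeriv hw hw0).intervalIntegrable a b)]

lemma contDiff_cexp_mul_I (c : ℝ) : ContDiff ℝ 1 fun t : ℝ ↦ Complex.exp (c * t * Complex.I) :=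
  ((contDiff_const.mul Complex.ofRealCLM.contDiff).mul contDiff_const).cexp

lemma argVariation_cexp_mul_I (c a b : ℝ) :
    argVariation (fun t ↦ Complex.exp (c * t * Complex.I)) a b = c * (b - a) := by
  have hlog (t : ℝ) : logDeriv (fun t : ℝ ↦ Complex.exp (c * t * Complex.I)) t =
      c * Complex.I := by
    have hexp : HasDerivAt (fun t : ℝ ↦ Complex.exp (c * t * Complex.I)) _ t :=
      (((hasDerivAt_id t).ofReal_comp.const_mul (c : ℂ)).mul_const Complex.I).cexp
    rw [logDeriv_apply, hexp.deriv]
    simp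
  simp only [argVariation, hlog, intervalIntegral.integral_const]
  simp [mul_comm]

lemma argVariation_add_period {T : ℝ} (hz : Function.Periodic z T) (a b : ℝ) :
    argVariation z a (a + T) = argVariation z b (b + T) := by
  have hlog : Function.Periodic (logDeriv z) T := fun t ↦ by
    rw [logDeriv_apply, logDeriv_apply, ← deriv_comp_add_const, hz t]
    congr 2
    exact funext hz
  simp only [argVariation, hlog.intervalIntegral_add_eq a b]

lemma mul_exp_integral_logDeriv (hz : ContDiff ℝ 1 z) (hz0 : ∀ t, z t ≠ 0) (a b : ℝ) :
    z a * Complex.exp (∫ t in a..b, logDeriv z t) = z b := by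
  have hlog := continuous_logDeriv hz hz0
  have hderiv (t) :
      HasDerivAt (fun x ↦ z x * Complex.exp (-∫ s in a..x, logDeriv z s)) 0 t := by
    convert! (hz.differentiable one_ne_zero t).hasDerivAt.mul
      (hlog.integral_hasStrictDerivAt a t).hasDerivAt.neg.cexp using 1
    rw [logDeriv_apply]
    field_simp [hz0 t]
    simp
  have hconst := is_const_of_deriv_eq_zero (fun t ↦ (hderiv t).differentiableAt)
    (fun t ↦ (hderiv t).deriv) a b
  simp only [intervalIntegral.integral_same, neg_zero, Complex.exp_zero, mul_one] at hconst
  rw [hconst, mul_assoc, ← Complex.exp_add, neg_add_cancel, Complex.exp_zero, mul_one]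

lemma exists_int_argVariation_eq (hz : ContDiff ℝ 1 z) (hz0 : ∀ t, z t ≠ 0) (hab : z b = z a) :
    ∃ n : ℤ, argVariation z a b = n * (2 * π) := by
  have hexp : Complex.exp (∫ t in a..b, logDeriv z t) = 1 :=
    mul_left_cancel₀ (hz0 a) (by rw [mul_exp_integral_logDeriv hz hz0, hab, mul_one])
  obtain ⟨n, hn⟩ := Complex.exp_eq_one_iff.mp hexp
  exact ⟨n, by simp [argVariation, hn]⟩

lemma continuousOn_argVariation {E : Type*} [NormedAddCommGroup E] [NormedSpace ℝ E]
    {Z : E → ℝ → ℂ} {S : Set E} (hZ : ContDiff ℝ 1 (uncurry Z)) (hZ0 : ∀ r ∈ S, ∀ t, Z r t ≠ 0)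
    (a b : ℝ) : ContinuousOn (fun r ↦ argVariation (Z r) a b) S := by
  rw [continuousOn_iff_continuous_domRestrict]
  refine Complex.continuous_im.comp
    (intervalIntegral.continuous_parametric_intervalIntegral_of_continuous'
      (f := fun (r : S) t ↦ logDeriv (Z r) t) ?_ a b)
  have hcoe : Continuous fun p : S × ℝ ↦ ((p.1 : E), p.2) := by fun_prop
  have hderiv := (contDiff_uncurry_deriv (n := 0) hZ (zero_add 1).le).continuous
  exact (hderiv.comp hcoe).div (hZ.continuous.comp hcoe) fun p ↦ hZ0 p.1 p.1.2 p.2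

lemma argVariation_eq_of_isPreconnected {E : Type*} [NormedAddCommGroup E] [NormedSpace ℝ E]
    {Z : E → ℝ → ℂ} {S : Set E} (hS : IsPreconnected S) (hZ : ContDiff ℝ 1 (uncurry Z))
    (hZ0 : ∀ r ∈ S, ∀ t, Z r t ≠ 0) (hab : ∀ r ∈ S, Z r b = Z r a) {r₁ r₂ : E} (hr₁ : r₁ ∈ S)
    (hr₂ : r₂ ∈ S) : argVariation (Z r₁) a b = argVariation (Z r₂) a b := by
  have hmaps : MapsTo (fun r ↦ argVariation (Z r) a b / (2 * π)) S (range ((↑) : ℤ → ℝ)) := by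
    intro r hr
    obtain ⟨n, hn⟩ := exists_int_argVariation_eq (z := Z r)
      (contDiff_of_uncurry hZ r) (hZ0 r hr) (hab r hr)
    exact ⟨n, by simp only [hn]; field_simp⟩
  have hdisc : IsDiscrete (range ((↑) : ℤ → ℝ)) :=
    ⟨Int.isClosedEmbedding_coe_real.isEmbedding.toHomeomorph.discreteTopology⟩
  obtain ⟨x, -, hx⟩ := hS.eqOn_const_of_mapsTo hdisc
    ((continuousOn_argVariation hZ hZ0 a b).div_const _) hmaps ⟨0, 0, Int.cast_zero⟩
  exact (div_left_inj' Real.two_pi_pos.ne').mp ((hx hr₁).trans (hx hr₂).symm)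

-- Squaring sends both half-planes `re < 0` and `re > 0` into the domain of the principal logarithm.
lemma abs_argVariation_le_pi_of_re_ne_zero_on_uIcc (hz : ContDiff ℝ 1 z) (hz0 : ∀ t, z t ≠ 0)
    (hre : ∀ t ∈ uIcc a b, (z t).re ≠ 0) : |argVariation z a b| ≤ π := by
  have hslit (t) (ht : t ∈ uIcc a b) : z t ^ 2 ∈ Complex.slitPlane := by
    rw [Complex.mem_slitPlane_iff]
    by_cases him : (z t).im = 0
    · left
      simpa [pow_two, him] using hre t ht
    · right
      simp [pow_two, him, hre t ht, mul_comm, ← two_mul]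
  have hderiv (t) (ht : t ∈ uIcc a b) :
      HasDerivAt (fun t ↦ Complex.log (z t ^ 2)) (2 * logDeriv z t) t := by
    convert! ((hz.differentiable one_ne_zero t).hasDerivAt.pow 2).clog_real (hslit t ht) using 1
    rw [logDeriv_apply, Pi.pow_apply]
    field_simp [hz0 t]
    simp [mul_comm]
  have hint := intervalIntegral.integral_eq_sub_of_hasDerivAt hderiv
    (((continuous_logDeriv hz hz0).const_mul 2).intervalIntegrable a b)
  have harg : 2 * argVariation z a b = (z b ^ 2).arg - (z a ^ 2).arg := by
    rw [intervalIntegral.integral_const_mul] at hint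
    simpa [argVariation, Complex.log_im] using congrArg Complex.im hint
  rw [abs_le]
  constructor <;> linarith [(z a ^ 2).neg_pi_lt_arg, (z a ^ 2).arg_le_pi,
    (z b ^ 2).neg_pi_lt_arg, (z b ^ 2).arg_le_pi]

lemma abs_argVariation_le_pi (hz : ContDiff ℝ 1 z) (hz0 : ∀ t, z t ≠ 0) (hab : a ≤ b)
    (hre : ∀ t ∈ Ioo a b, (z t).re ≠ 0) : |argVariation z a b| ≤ π := by
  rcases hab.eq_or_lt with rfl | hab
  · simp [argVariation, Real.pi_nonneg]
  have hcont : Continuous fun p : ℝ × ℝ ↦ |argVariation z p.1 p.2| := by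
    have hprim : Continuous fun x ↦ argVariation z a x :=
      Complex.continuous_im.comp (intervalIntegral.continuous_primitive
        (continuous_logDeriv hz hz0).intervalIntegrable a)
    have hsub (p : ℝ × ℝ) :
        argVariation z p.1 p.2 = argVariation z a p.2 - argVariation z a p.1 :=
      eq_sub_of_add_eq' (argVariation_add_adjacent hz hz0 a p.1 p.2)
    simp only [hsub]
    fun_prop
  have hIoo : Ioo a b ×ˢ Ioo a b ⊆ {p | |argVariation z p.1 p.2| ≤ π} := fun p hp ↦
    abs_argVariation_le_pi_of_re_ne_zero_on_uIcc hz hz0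
      fun t ht ↦ hre t (ordConnected_Ioo.uIcc_subset hp.1 hp.2 ht)
  have hIcc := (isClosed_le hcont continuous_const).closure_subset_iff.mpr hIoo
  rw [closure_prod_eq, closure_Ioo hab.ne] at hIcc
  exact hIcc (a := (a, b)) ⟨left_mem_Icc.mpr hab.le, right_mem_Icc.mpr hab.le⟩

lemma abs_argVariation_le_of_finset (hz : ContDiff ℝ 1 z) (hz0 : ∀ t, z t ≠ 0) (hab : a ≤ b)
    {Z : Finset ℝ} (hZ : ∀ t ∈ Ioo a b, (z t).re = 0 → t ∈ Z) :
    |argVariation z a b| ≤ (Z.card + 1) * π := by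
  induction Z using Finset.induction_on_max generalizing b with
  | empty =>
    simpa using abs_argVariation_le_pi hz hz0 hab fun t ht h0 ↦ by simpa using hZ t ht h0
  | insert c Z hc ih =>
    have hcard : (insert c Z).card = Z.card + 1 :=
      Finset.card_insert_of_notMem fun h ↦ (hc c h).false
    by_cases hcab : c ∈ Ioo a b
    · have hleft : |argVariation z a c| ≤ (Z.card + 1) * π := ih hcab.1.le fun t ht h0 ↦
        (Finset.mem_insert.mp (hZ t ⟨ht.1, ht.2.trans hcab.2⟩ h0)).resolve_left ht.2.ne
      have hright : |argVariation z c b| ≤ π := abs_argVariation_le_pi hz hz0 hcab.2.le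
        fun t ht h0 ↦ (Finset.mem_insert.mp (hZ t ⟨hcab.1.trans ht.1, ht.2⟩ h0)).elim ht.1.ne'
          fun h ↦ ht.1.not_gt (hc t h)
      rw [← argVariation_add_adjacent hz hz0 a c b, hcard]
      push_cast
      linarith [abs_add_le (argVariation z a c) (argVariation z c b)]
    · have hle : |argVariation z a b| ≤ (Z.card + 1) * π := ih hab fun t ht h0 ↦
        (Finset.mem_insert.mp (hZ t ht h0)).resolve_left (ne_of_mem_of_not_mem ht hcab)
      rw [hcard]
      push_cast
      linarith [Real.pi_pos]

lemma abs_argVariation_le (hz : ContDiff ℝ 1 z) (hz0 : ∀ t, z t ≠ 0) (hab : a ≤ b) {n : ℕ}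
    (hn : {t ∈ Ioo a b | (z t).re = 0}.encard ≤ n) : |argVariation z a b| ≤ (n + 1) * π := by
  obtain ⟨Z, hZ⟩ := (finite_of_encard_le_coe hn).exists_finset_coe
  rw [← hZ, encard_coe_eq_coe_finsetCard, Nat.cast_le] at hn
  calc |argVariation z a b| ≤ (Z.card + 1) * π := abs_argVariation_le_of_finset hz hz0 hab
        fun t ht h0 ↦ Finset.mem_coe.mp (hZ ▸ ⟨ht, h0⟩)
    _ ≤ (n + 1) * π := by gcongr

end ArgVariation

section Euler

variable {σ R : Type*} [CommSemiring R]

lemma homogeneousComponent_totalDegree_ne_zero {f : MvPolynomial σ R} (hf : f ≠ 0) :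
    homogeneousComponent f.totalDegree f ≠ 0 := by
  obtain ⟨s, hs, hdeg⟩ := f.support.exists_mem_eq_sup (support_nonempty.mpr hf) Finsupp.degree
  have hdeg : f.totalDegree = s.degree := hdeg
  refine ne_zero_iff.mpr ⟨s, ?_⟩
  rw [coeff_homogeneousComponent, if_pos hdeg.symm]
  exact mem_support_iff.mp hs

variable [Fintype σ]

/-- The Euler operator `∑ᵢ xᵢ ∂/∂xᵢ`; on a circle around the origin it is the radius times the
radial derivative. -/
noncomputable def eulerOperator (f : MvPolynomial σ R) : MvPolynomial σ R :=
  ∑ i, X i * pderiv i f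

lemma eulerOperator_eq_sum (f : MvPolynomial σ R) :
    eulerOperator f = ∑ k ∈ Finset.range (f.totalDegree + 1), k • homogeneousComponent k f := by
  have hcomp (k : ℕ) := (homogeneousComponent_isHomogeneous k f).sum_X_mul_pderiv
  simp only [← hcomp]
  rw [Finset.sum_comm, eulerOperator]
  refine Finset.sum_congr rfl fun i _ ↦ ?_
  rw [← Finset.mul_sum, ← map_sum, sum_homogeneousComponent]

lemma homogeneousComponent_eulerOperator (f : MvPolynomial σ R) :
    homogeneousComponent f.totalDegree (eulerOperator f) =
      f.totalDegree • homogeneousComponent f.totalDegree f := by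
  rw [eulerOperator_eq_sum, map_sum, Finset.sum_eq_single f.totalDegree]
  · rw [map_nsmul, homogeneousComponent_eq_self (homogeneousComponent_isHomogeneous _ f)]
  · intro k _ hk
    rw [map_nsmul, homogeneousComponent_of_mem (homogeneousComponent_mem k f), if_neg hk.symm,
      smul_zero]
  · simp

lemma totalDegree_eulerOperator_le (f : MvPolynomial σ R) :
    (eulerOperator f).totalDegree ≤ f.totalDegree := by
  rw [eulerOperator_eq_sum]
  refine totalDegree_finsetSum_le fun k hk ↦ ?_
  calc (k • homogeneousComponent k f).totalDegree ≤ (homogeneousComponent k f).totalDegree :=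
        totalDegree_smul_le _ _
    _ ≤ k := (homogeneousComponent_isHomogeneous k f).totalDegree_le
    _ ≤ f.totalDegree := Finset.mem_range_succ_iff.mp hk

end Euler

section GradCurve

variable {f : MvPolynomial (Fin 2) ℝ} {r R : ℝ}

/-- The curve `∂f/∂x + i ∂f/∂y` along the circle of radius `r`: the gradient of `f` seen in `ℂ`. -/
noncomputable def gradCurve (f : MvPolynomial (Fin 2) ℝ) (r t : ℝ) : ℂ :=
  circleEval (pderiv 0 f) r t + circleEval (pderiv 1 f) r t * Complex.I

/-- The gradient along the circle of radius `r` in the rotating frame of the circle, so that its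
real part is the radial and its imaginary part the tangential component. -/
noncomputable def polarGradCurve (f : MvPolynomial (Fin 2) ℝ) (r t : ℝ) : ℂ :=
  gradCurve f r t * Complex.exp ((-1 : ℝ) * t * Complex.I)

lemma contDiff_uncurry_gradCurve (f : MvPolynomial (Fin 2) ℝ) :
    ContDiff ℝ ω (uncurry (gradCurve f)) :=
  (Complex.ofRealCLM.contDiff.comp (contDiff_uncurry_circleEval _)).add
    ((Complex.ofRealCLM.contDiff.comp (contDiff_uncurry_circleEval _)).mul contDiff_const)

lemma contDiff_gradCurve (f : MvPolynomial (Fin 2) ℝ) (r : ℝ) : ContDiff ℝ 1 (gradCurve f r) :=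
  (contDiff_of_uncurry (contDiff_uncurry_gradCurve f) r).of_le le_top

lemma periodic_gradCurve (f : MvPolynomial (Fin 2) ℝ) (r : ℝ) :
    Function.Periodic (gradCurve f r) (2 * π) := fun t ↦ by
  simp only [gradCurve, circleEval_add_two_pi]

lemma gradCurve_ne_zero (hadm : ∀ p : ℝ × ℝ, IsCriticalPt f p → p.1 ^ 2 + p.2 ^ 2 < r ^ 2)
    (t : ℝ) : gradCurve f r t ≠ 0 := by
  intro h0
  have hlt := hadm (r * Real.cos t, r * Real.sin t)
    ⟨show circleEval (pderiv 0 f) r t = 0 by simpa [gradCurve] using congrArg Complex.re h0,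
      show circleEval (pderiv 1 f) r t = 0 by simpa [gradCurve] using congrArg Complex.im h0⟩
  refine hlt.ne ?_
  linear_combination r ^ 2 * Real.cos_sq_add_sin_sq t

lemma argVariation_gradCurve (hz0 : ∀ t, gradCurve f r t ≠ 0) :
    argVariation (gradCurve f r) 0 (2 * π) = gradIndex f r * (2 * π) := by
  have hderiv (t) :
      deriv (gradCurve f r) t = deriv (uFun f r) t + deriv (vFun f r) t * Complex.I := by
    have hd (P) := (analyticAt_circleEval P r t).differentiableAt.hasDerivAt
    exact ((hd _).ofReal_comp.add ((hd _).ofReal_comp.mul_const Complex.I)).deriv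
  have him (t) : (logDeriv (gradCurve f r) t).im =
      (uFun f r t * deriv (vFun f r) t - vFun f r t * deriv (uFun f r) t) /
        (uFun f r t ^ 2 + vFun f r t ^ 2) := by
    have hz : gradCurve f r t = uFun f r t + vFun f r t * Complex.I := rfl
    rw [logDeriv_apply, hderiv, hz, Complex.div_im, Complex.normSq_add_mul_I]
    simp only [Complex.add_im, Complex.ofReal_im, Complex.mul_im, Complex.ofReal_re, Complex.I_im,
      mul_one, Complex.I_re, mul_zero, add_zero, zero_add, Complex.add_re, Complex.mul_re, sub_self]
    ring
  have hint := (continuous_logDeriv (contDiff_gradCurve f r) hz0).intervalIntegrable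
    (μ := MeasureTheory.volume) 0 (2 * π)
  have hcomm := Complex.imCLM.intervalIntegral_comp_comm hint
  simp only [Complex.imCLM_apply, him] at hcomm
  rw [argVariation, ← hcomm, gradIndex]
  field_simp

lemma exists_int_gradIndex_eq (hz0 : ∀ t, gradCurve f r t ≠ 0) : ∃ n : ℤ, gradIndex f r = n := by
  obtain ⟨n, hn⟩ := exists_int_argVariation_eq (a := 0) (b := 2 * π) (contDiff_gradCurve f r) hz0
    (by rw [← periodic_gradCurve f r 0, zero_add])
  rw [argVariation_gradCurve hz0] at hn
  exact ⟨n, mul_right_cancel₀ Real.two_pi_pos.ne' hn⟩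

lemma gradIndex_eq_of_le (hz0 : ∀ r ≥ R, ∀ t, gradCurve f r t ≠ 0) (hr : R ≤ r) :
    gradIndex f R = gradIndex f r := by
  have hcurve := argVariation_eq_of_isPreconnected (a := 0) (b := 2 * π) isPreconnected_Ici
    ((contDiff_uncurry_gradCurve f).of_le le_top) hz0
    (fun r _ ↦ by rw [← periodic_gradCurve f r 0, zero_add]) self_mem_Ici hr
  rw [argVariation_gradCurve (hz0 R le_rfl), argVariation_gradCurve (hz0 r hr)] at hcurve
  exact mul_right_cancel₀ Real.two_pi_pos.ne' hcurve

lemma mul_re_polarGradCurve (f : MvPolynomial (Fin 2) ℝ) (r t : ℝ) :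
    r * (polarGradCurve f r t).re = circleEval (eulerOperator f) r t := by
  rw [polarGradCurve, Complex.mul_re, ← Complex.ofReal_mul, Complex.exp_ofReal_mul_I_re,
    Complex.exp_ofReal_mul_I_im]
  have hre : (gradCurve f r t).re = circleEval (pderiv 0 f) r t := by simp [gradCurve]
  have him : (gradCurve f r t).im = circleEval (pderiv 1 f) r t := by simp [gradCurve]
  have heuler : circleEval (eulerOperator f) r t = r * Real.cos t * circleEval (pderiv 0 f) r t +
      r * Real.sin t * circleEval (pderiv 1 f) r t := by
    simp [eulerOperator, circleEval, evalP]
  rw [hre, him, heuler, neg_one_mul, Real.cos_neg, Real.sin_neg]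
  ring

lemma contDiff_polarGradCurve (f : MvPolynomial (Fin 2) ℝ) (r : ℝ) :
    ContDiff ℝ 1 (polarGradCurve f r) :=
  (contDiff_gradCurve f r).mul (contDiff_cexp_mul_I (-1))

lemma argVariation_polarGradCurve (hz0 : ∀ t, gradCurve f r t ≠ 0) (a : ℝ) :
    argVariation (polarGradCurve f r) a (a + 2 * π) = (gradIndex f r - 1) * (2 * π) := by
  have hmul := argVariation_mul (contDiff_gradCurve f r) hz0 (contDiff_cexp_mul_I (-1))
    (fun t ↦ Complex.exp_ne_zero _) a (a + 2 * π)
  rw [argVariation_add_period (periodic_gradCurve f r) a 0, zero_add, argVariation_gradCurve hz0,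
    argVariation_cexp_mul_I] at hmul
  exact hmul.trans (by ring)

lemma abs_gradIndex_sub_one_le (hz0 : ∀ t, gradCurve f r t ≠ 0) {n : ℕ} {a : ℝ}
    (hn : {t ∈ Icc a (a + 2 * π) | circleEval (eulerOperator f) r t = 0}.encard ≤ n) :
    |gradIndex f r - 1| ≤ (n + 1) / 2 := by
  have hzeros : {t ∈ Ioo a (a + 2 * π) | (polarGradCurve f r t).re = 0} ⊆
      {t ∈ Icc a (a + 2 * π) | circleEval (eulerOperator f) r t = 0} := fun t ⟨ht, h0⟩ ↦
    ⟨Ioo_subset_Icc_self ht, by rw [← mul_re_polarGradCurve, h0, mul_zero]⟩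
  have harg := abs_argVariation_le (contDiff_polarGradCurve f r)
    (fun t ↦ mul_ne_zero (hz0 t) (Complex.exp_ne_zero _))
    (le_add_of_nonneg_right Real.two_pi_pos.le) ((encard_le_encard hzeros).trans hn)
  rw [argVariation_polarGradCurve hz0, abs_mul, abs_of_pos Real.two_pi_pos, ← mul_assoc] at harg
  rw [le_div_iff₀ two_pos]
  exact le_of_mul_le_mul_right harg Real.pi_pos

end GradCurve

section Index

variable {f : MvPolynomial (Fin 2) ℝ}

lemma totalDegree_ne_zero_of_not_isCriticalPt {p : ℝ × ℝ} (hp : ¬IsCriticalPt f p) :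
    f.totalDegree ≠ 0 := by
  intro hdeg
  rw [totalDegree_eq_zero_iff_eq_C.mp hdeg] at hp
  simp [IsCriticalPt, evalP] at hp

lemma exists_eventually_encard_zeros_eulerOperator_le (hdeg : f.totalDegree ≠ 0) :
    ∃ a, ∀ᶠ r in atTop,
      {t ∈ Icc a (a + 2 * π) | circleEval (eulerOperator f) r t = 0}.encard ≤
        (2 * realDegreeOf (homogeneousComponent f.totalDegree f) : ℕ) := by
  set F := homogeneousComponent f.totalDegree f
  have hF0 : F ≠ 0 := homogeneousComponent_totalDegree_ne_zero fun h ↦ hdeg (by simp [h])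
  have hd : (f.totalDegree : ℝ) ≠ 0 := Nat.cast_ne_zero.mpr hdeg
  have htop : homogeneousComponent f.totalDegree (eulerOperator f) = (f.totalDegree : ℝ) • F := by
    rw [homogeneousComponent_eulerOperator, Nat.cast_smul_eq_nsmul]
  obtain ⟨a, ha⟩ := exists_circleEval_ne_zero
    (htop ▸ homogeneousComponent_isHomogeneous f.totalDegree (eulerOperator f))
    (smul_ne_zero hd hF0)
  refine ⟨a, ?_⟩
  rw [← realDegreeOf_smul F hd, ← htop]
  exact eventually_encard_zeros_Icc_two_pi_le (totalDegree_eulerOperator_le f) (htop ▸ ha)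

end Index

theorem index_ge_one_sub_real_degree_general (f : MvPolynomial (Fin 2) ℝ) (R : ℝ) (hR : 0 < R)
    (hadm : ∀ p : ℝ × ℝ, IsCriticalPt f p → p.1 ^ 2 + p.2 ^ 2 < R ^ 2) :
    1 - (realDegreeOf (homogeneousComponent f.totalDegree f) : ℝ) ≤ gradIndex f R := by
  have hz0 : ∀ r ≥ R, ∀ t, gradCurve f r t ≠ 0 := fun r hr ↦
    gradCurve_ne_zero fun p hp ↦ (hadm p hp).trans_le (pow_le_pow_left₀ hR.le hr 2)
  have hdeg : f.totalDegree ≠ 0 := totalDegree_ne_zero_of_not_isCriticalPt (p := (R, 0))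
    fun hp ↦ (hadm _ hp).ne (by ring)
  obtain ⟨a, ha⟩ := exists_eventually_encard_zeros_eulerOperator_le hdeg
  obtain ⟨r, hzeros, hr⟩ := (ha.and (eventually_ge_atTop R)).exists
  have hbound := (abs_le.mp (abs_gradIndex_sub_one_le (hz0 r hr) hzeros)).1
  rw [gradIndex_eq_of_le hz0 hr]
  obtain ⟨n, hn⟩ := exists_int_gradIndex_eq (hz0 r hr)
  have hint : 1 ≤ 2 * (n + realDegreeOf (homogeneousComponent f.totalDegree f)) := by
    rw [hn] at hbound
    push_cast at hbound
    exact_mod_cast (show (1 : ℝ) ≤ 2 * (n + realDegreeOf _) by linarith)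
  rw [hn]
  exact_mod_cast (by omega : 1 - (realDegreeOf (homogeneousComponent f.totalDegree f) : ℤ) ≤ n)

theorem index_ge_one_sub_real_degree
    (f : MvPolynomial (Fin 2) ℝ) (d : ℕ) (hd : f.totalDegree = d) (hd1 : 1 ≤ d)
    (hfin : {p : ℝ × ℝ | IsCriticalPt f p}.Finite)
    (R : ℝ) (hR : 0 < R)
    (hadm : ∀ p : ℝ × ℝ, IsCriticalPt f p → p.1 ^ 2 + p.2 ^ 2 < R ^ 2)
    (i : ℤ) (hi : (i : ℝ) = gradIndex f R) :
    1 - (realDegreeOf (homogeneousComponent d f) : ℤ) ≤ i := by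
  subst hd
  exact_mod_cast hi ▸ index_ge_one_sub_real_degree_general f R hR hadm
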